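/- Let θ₀ ∈ ℝ and d ∈ ℕ. For each θ ∈ ℝ let p θ : ℝ^d → ℝ be a strictly positive measurable function with Z(θ) = ∫ p θ x dx finite and positive, and let π θ (x) = p θ x / Z(θ). Assume: (i) there is a neighborhood U of θ₀ such that for almost every x the map θ ↦ p θ x is twice differentiable on U; (ii) there are integrable functions g₁, g₂ with |∂θ p θ x| ≤ g₁ x and |∂²θ p θ x| ≤ g₂ x for all θ ∈ U and almost every x. Then θ ↦ log Z(θ) is twice differentiable at θ₀ and (d²/dθ² log Z(θ))|_{θ=θ₀} = −((d/dθ log Z(θ))|_{θ=θ₀})² + ∫ [ ∂²θ log(p θ x)|_{θ=θ₀} + (∂θ log(p θ x)|_{θ=θ₀})² ] · π θ₀ (x) dx. -/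

import Mathlib

open MeasureTheory Filter Topology Set

/-- A parametric derivative is jointly measurable on a rectangle, provided that the function is
measurable in the variable and differentiable in the parameter. -/
lemma measurable_prod_deriv_of_differentiableAt {α : Type*} [MeasurableSpace α]
    {F : ℝ → α → ℝ} {a b : ℝ} (hab : a ≤ b) (hF_meas : ∀ θ ∈ Icc a b, Measurable (F θ))
    (hF_diff : ∀ x, ∀ θ ∈ Icc a b, DifferentiableAt ℝ (fun t => F t x) θ) :
    Measurable ((Ioo a b ×ˢ univ).indicator
      fun z : ℝ × α => deriv (fun t => F t z.2) z.1) := by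
  have hproj : ∀ θ, ((projIcc a b hab θ : Icc a b) : ℝ) ∈ Icc a b :=
    fun θ => (projIcc a b hab θ).2
  set K : ℝ → α → ℝ := fun θ => F (projIcc a b hab θ) with hK
  have hK_meas : Measurable (Function.uncurry K) := by
    refine measurable_uncurry_of_continuous_of_measurable (fun x => ?_)
      fun θ => hF_meas _ (hproj θ)
    have hc : ContinuousOn (fun t => F t x) (Icc a b) :=
      fun θ hθ => (hF_diff x θ hθ).continuousAt.continuousWithinAt
    exact hc.comp_continuous (continuous_subtype_val.comp continuous_projIcc) hproj
  have hK_deriv : ∀ x, ∀ θ ∈ Ioo a b,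
      HasDerivAt (fun t => K t x) (deriv (fun t => F t x) θ) θ := by
    intro x θ hθ
    refine (hF_diff x θ (Ioo_subset_Icc_self hθ)).hasDerivAt.congr_of_eventuallyEq ?_
    filter_upwards [Icc_mem_nhds hθ.1 hθ.2] with t ht
    simp only [hK, projIcc_of_mem hab ht]
  obtain ⟨u, -, hu_pos, hu⟩ := exists_seq_strictAnti_tendsto (0 : ℝ)
  have hu' : Tendsto u atTop (𝓝[≠] 0) :=
    tendsto_nhdsWithin_iff.2 ⟨hu, Eventually.of_forall fun n => (hu_pos n).ne'⟩
  refine measurable_of_tendsto_metrizable (f := fun n => (Ioo a b ×ˢ univ).indicator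
    fun z : ℝ × α => (u n)⁻¹ * (K (z.1 + u n) z.2 - K z.1 z.2)) (fun n => ?_) ?_
  · refine Measurable.indicator ?_ (measurableSet_Ioo.prod MeasurableSet.univ)
    have hshift : Measurable fun z : ℝ × α => K (z.1 + u n) z.2 :=
      hK_meas.comp ((measurable_fst.add_const (u n)).prodMk measurable_snd)
    exact (hshift.sub hK_meas).const_mul _
  · refine tendsto_pi_nhds.2 fun z => ?_
    by_cases hz : z ∈ Ioo a b ×ˢ (univ : Set α)
    · simp only [indicator_of_mem hz]
      exact (hK_deriv z.2 z.1 hz.1).tendsto_slope_zero.comp hu'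
    · simp only [indicator_of_notMem hz]
      exact tendsto_const_nhds

/-- A parametric derivative at a fixed parameter is measurable in the variable. -/
lemma measurable_deriv_of_differentiableAt {α : Type*} [MeasurableSpace α]
    {F : ℝ → α → ℝ} {U : Set ℝ} (hU : IsOpen U) (hF_meas : ∀ θ ∈ U, Measurable (F θ))
    (hF_diff : ∀ x, ∀ θ ∈ U, DifferentiableAt ℝ (fun t => F t x) θ) {θ : ℝ} (hθ : θ ∈ U) :
    Measurable fun x => deriv (fun t => F t x) θ := by
  obtain ⟨ε, hε, hεU⟩ := Metric.nhds_basis_closedBall.mem_iff.1 (hU.mem_nhds hθ)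
  rw [Real.closedBall_eq_Icc] at hεU
  have h := (measurable_prod_deriv_of_differentiableAt (by linarith : θ - ε ≤ θ + ε)
    (fun t ht => hF_meas t (hεU ht)) fun x t ht => hF_diff x t (hεU ht)).comp
    (measurable_prodMk_left (x := θ))
  convert h using 2 with x
  simp [indicator, hε]

/-- A differentiable function whose derivative is bounded almost everywhere is Lipschitz. -/
lemma lipschitzOnWith_of_ae_norm_deriv_le {f : ℝ → ℝ} {C : NNReal} {s : Set ℝ}
    (hs : s.OrdConnected) (hf : ∀ t ∈ s, DifferentiableAt ℝ f t)
    (hC : ∀ᵐ t, t ∈ s → ‖deriv f t‖ ≤ C) : LipschitzOnWith C f s := by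
  refine LipschitzOnWith.of_dist_le_mul fun y hy x hx => ?_
  have hsub : uIcc x y ⊆ s := hs.uIcc_subset hx hy
  have hae : ∀ᵐ t, t ∈ uIoc x y → ‖deriv f t‖ ≤ C :=
    hC.mono fun t ht h => ht (hsub (uIoc_subset_uIcc h))
  have hint : IntervalIntegrable (deriv f) volume x y := by
    refine (intervalIntegrable_const (c := (C : ℝ))).mono_fun
      (measurable_deriv f).aestronglyMeasurable ?_
    refine (ae_restrict_iff' measurableSet_uIoc).2 (hae.mono fun t ht h => ?_)
    simpa using ht h
  have heq := intervalIntegral.integral_eq_sub_of_hasDerivAt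
    (fun t ht => (hf t (hsub ht)).hasDerivAt) hint
  rw [Real.dist_eq, Real.dist_eq, ← heq]
  exact intervalIntegral.norm_integral_le_of_norm_le_const_ae hae

/-- Differentiation under the integral sign when the derivative is dominated, at each parameter,
for almost every value of the variable; the exceptional null set may depend on the parameter. -/
lemma hasDerivAt_integral_of_forall_ae_deriv_le {α : Type*} [MeasurableSpace α]
    {μ : Measure α} [SFinite μ] {F : ℝ → α → ℝ} {U : Set ℝ} (hU : IsOpen U)
    (hF_meas : ∀ θ ∈ U, Measurable (F θ))
    (hF_diff : ∀ x, ∀ θ ∈ U, DifferentiableAt ℝ (fun t => F t x) θ)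
    {g : α → ℝ} (hg : Integrable g μ)
    (hbound : ∀ θ ∈ U, ∀ᵐ x ∂μ, |deriv (fun t => F t x) θ| ≤ g x)
    {θ₀ : ℝ} (hθ₀ : θ₀ ∈ U) (hF_int : Integrable (F θ₀) μ) :
    Integrable (fun x => deriv (fun t => F t x) θ₀) μ ∧
      HasDerivAt (fun θ => ∫ x, F θ x ∂μ) (∫ x, deriv (fun t => F t x) θ₀ ∂μ) θ₀ := by
  obtain ⟨ε, hε, hεU⟩ := Metric.nhds_basis_closedBall.mem_iff.1 (hU.mem_nhds hθ₀)
  rw [Real.closedBall_eq_Icc] at hεU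
  have hIU : Ioo (θ₀ - ε) (θ₀ + ε) ⊆ U := Ioo_subset_Icc_self.trans hεU
  set G := hg.1.mk g
  have hG_meas : Measurable G := hg.1.stronglyMeasurable_mk.measurable
  have hgG : g =ᵐ[μ] G := hg.1.ae_eq_mk
  have hD := measurable_prod_deriv_of_differentiableAt (by linarith : θ₀ - ε ≤ θ₀ + ε)
    (fun t ht => hF_meas t (hεU ht)) fun x t ht => hF_diff x t (hεU ht)
  set D := (Ioo (θ₀ - ε) (θ₀ + ε) ×ˢ (univ : Set α)).indicator
    fun z : ℝ × α => deriv (fun t => F t z.2) z.1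
  have hD_mem : ∀ θ ∈ Ioo (θ₀ - ε) (θ₀ + ε), ∀ x, D (θ, x) = deriv (fun t => F t x) θ :=
    fun θ hθ x => indicator_of_mem (mk_mem_prod hθ (mem_univ x)) _
  have hswap : ∀ᵐ x ∂μ, ∀ᵐ θ, |D (θ, x)| ≤ |G x| := by
    refine (Measure.ae_ae_comm (p := fun (θ : ℝ) x => |D (θ, x)| ≤ |G x|) ?_).1
      (Eventually.of_forall fun θ => ?_)
    · exact measurableSet_le hD.abs (hG_meas.comp measurable_snd).abs
    · by_cases hθ : θ ∈ Ioo (θ₀ - ε) (θ₀ + ε)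
      · filter_upwards [hbound θ (hIU hθ), hgG] with x hx hxG
        rw [hD_mem θ hθ x, ← hxG]
        exact hx.trans (le_abs_self _)
      · refine Eventually.of_forall fun x => ?_
        have : D (θ, x) = 0 := indicator_of_notMem (fun h => hθ h.1) _
        simp [this]
  have hlip : ∀ᵐ x ∂μ, LipschitzOnWith (Real.nnabs (G x)) (fun t => F t x)
      (Ioo (θ₀ - ε) (θ₀ + ε)) := by
    filter_upwards [hswap] with x hx
    refine lipschitzOnWith_of_ae_norm_deriv_le ordConnected_Ioo
      (fun t ht => hF_diff x t (hIU ht)) ?_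
    filter_upwards [hx] with t ht hmem
    rw [hD_mem t hmem x] at ht
    simpa using ht
  refine hasDerivAt_integral_of_dominated_loc_of_lip
    (Ioo_mem_nhds (by linarith) (by linarith)) ?_ hF_int
    (measurable_deriv_of_differentiableAt hU hF_meas hF_diff hθ₀).aestronglyMeasurable
    hlip (hg.congr hgG) (Eventually.of_forall fun x => (hF_diff x θ₀ hθ₀).hasDerivAt)
  filter_upwards [hU.mem_nhds hθ₀] with θ hθ
  exact (hF_meas θ hθ).aestronglyMeasurable

/-- First and second derivatives of `log ∘ f`. -/
lemma deriv_log_and_deriv_deriv_log {f f' : ℝ → ℝ} {f'' t₀ : ℝ} (hpos : ∀ t, 0 < f t)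
    (hf : ∀ᶠ t in 𝓝 t₀, HasDerivAt f (f' t) t) (hf' : HasDerivAt f' f'' t₀) :
    deriv (fun t => Real.log (f t)) t₀ = f' t₀ / f t₀ ∧
      HasDerivAt (deriv fun t => Real.log (f t)) (f'' / f t₀ - (f' t₀ / f t₀) ^ 2) t₀ := by
  have hlog : deriv (fun t => Real.log (f t)) =ᶠ[𝓝 t₀] fun t => f' t / f t :=
    hf.mono fun t ht => (ht.log (hpos t).ne').deriv
  refine ⟨hlog.self_of_nhds, HasDerivAt.congr_of_eventuallyEq ?_ hlog⟩
  have hne := (hpos t₀).ne'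
  have heq : f'' / f t₀ - (f' t₀ / f t₀) ^ 2 = (f'' * f t₀ - f' t₀ * f' t₀) / f t₀ ^ 2 := by
    field_simp
  rw [heq]
  exact hf'.fun_div hf.self_of_nhds hne

/-- Louis' identity for a one-dimensional parameter: the second derivative of the
log-marginal likelihood `log Z(θ)`, with `Z θ = ∫ p θ x dx` and posterior
`π θ = p θ / Z θ`, equals
`−(∇θ log Z(θ₀))² + E_{π_{θ₀}}[∂²θ log p θ x + (∂θ log p θ x)²]`. -/
theorem louis_identity
    (θ₀ : ℝ) (d : ℕ)
    (p : ℝ → (Fin d → ℝ) → ℝ)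
    (hp_pos : ∀ θ x, 0 < p θ x) (hp_meas : ∀ θ, Measurable (p θ))
    (hp_int : ∀ θ, Integrable (p θ))
    (Z : ℝ → ℝ) (hZ : ∀ θ, Z θ = ∫ x, p θ x) (hZ_pos : ∀ θ, 0 < Z θ)
    (π : ℝ → (Fin d → ℝ) → ℝ) (hπ : ∀ θ x, π θ x = p θ x / Z θ)
    (U : Set ℝ) (hU : U ∈ 𝓝 θ₀)
    (hdiff : ∀ᵐ x : Fin d → ℝ, ∀ θ ∈ U,
      DifferentiableAt ℝ (fun θ' => p θ' x) θ ∧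
        DifferentiableAt ℝ (deriv (fun θ' => p θ' x)) θ)
    (g₁ g₂ : (Fin d → ℝ) → ℝ) (hg₁ : Integrable g₁) (hg₂ : Integrable g₂)
    (hbound₁ : ∀ θ ∈ U, ∀ᵐ x : Fin d → ℝ, |deriv (fun θ' => p θ' x) θ| ≤ g₁ x)
    (hbound₂ : ∀ θ ∈ U, ∀ᵐ x : Fin d → ℝ,
      |deriv (deriv (fun θ' => p θ' x)) θ| ≤ g₂ x) :
    DifferentiableAt ℝ (fun θ => Real.log (Z θ)) θ₀ ∧
    DifferentiableAt ℝ (deriv (fun θ => Real.log (Z θ))) θ₀ ∧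
    deriv (deriv (fun θ => Real.log (Z θ))) θ₀ =
      -(deriv (fun θ => Real.log (Z θ)) θ₀) ^ 2 +
        ∫ x, (deriv (deriv (fun θ' => Real.log (p θ' x))) θ₀ +
            (deriv (fun θ' => Real.log (p θ' x)) θ₀) ^ 2) * π θ₀ x := by
  set V := interior U
  have hVo : IsOpen V := isOpen_interior
  have hVU : V ⊆ U := interior_subset
  have hθ₀ : θ₀ ∈ V := mem_interior_iff_mem_nhds.2 hU
  obtain ⟨N, hN_sub, hN_meas, hN_null⟩ := exists_measurable_superset_of_null (ae_iff.1 hdiff)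
  set G := Nᶜ
  have hG_ae : ∀ᵐ x, x ∈ G := compl_mem_ae_iff.2 hN_null
  have hG_diff : ∀ x ∈ G, ∀ θ ∈ U, DifferentiableAt ℝ (fun θ' => p θ' x) θ ∧
      DifferentiableAt ℝ (deriv (fun θ' => p θ' x)) θ :=
    fun x hx => by_contra fun h => hx (hN_sub h)
  -- Modify `p` on a null set so that it is twice differentiable for every `x`.
  set q : ℝ → (Fin d → ℝ) → ℝ := fun θ => G.indicator (p θ)
  have hq_mem : ∀ x ∈ G, (fun t => q t x) = fun t => p t x :=
    fun x hx => funext fun t => indicator_of_mem hx _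
  have hq_notMem : ∀ x ∉ G, (fun t => q t x) = fun _ => 0 :=
    fun x hx => funext fun t => indicator_of_notMem hx _
  have hq_meas : ∀ θ ∈ V, Measurable (q θ) :=
    fun θ _ => (hp_meas θ).indicator hN_meas.compl
  have hq_diff : ∀ x, ∀ θ ∈ V, DifferentiableAt ℝ (fun t => q t x) θ := by
    intro x θ hθ
    by_cases hx : x ∈ G
    · rw [hq_mem x hx]
      exact (hG_diff x hx θ (hVU hθ)).1
    · rw [hq_notMem x hx]
      exact differentiableAt_const _
  have hq_diff₂ : ∀ x, ∀ θ ∈ V, DifferentiableAt ℝ (deriv fun t => q t x) θ := by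
    intro x θ hθ
    by_cases hx : x ∈ G
    · rw [hq_mem x hx]
      exact (hG_diff x hx θ (hVU hθ)).2
    · simp [hq_notMem x hx]
  have hfirst : ∀ θ ∈ V, Integrable (fun x => deriv (fun t => q t x) θ) ∧
      HasDerivAt (fun θ => ∫ x, q θ x) (∫ x, deriv (fun t => q t x) θ) θ := by
    intro θ hθ
    refine hasDerivAt_integral_of_forall_ae_deriv_le hVo hq_meas hq_diff hg₁ (fun θ hθ => ?_) hθ
      ((hp_int θ).indicator hN_meas.compl)
    filter_upwards [hbound₁ θ (hVU hθ), hG_ae] with x hx hxG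
    rwa [hq_mem x hxG]
  have hsecond := hasDerivAt_integral_of_forall_ae_deriv_le
    (F := fun θ x => deriv (fun t => q t x) θ) hVo
    (fun θ hθ => measurable_deriv_of_differentiableAt hVo hq_meas hq_diff hθ) hq_diff₂ hg₂
    (fun θ hθ => by
      filter_upwards [hbound₂ θ (hVU hθ), hG_ae] with x hx hxG
      rwa [hq_mem x hxG]) hθ₀ (hfirst θ₀ hθ₀).1
  have hZq : Z = fun θ => ∫ x, q θ x := by
    funext θ
    rw [hZ]
    exact integral_congr_ae (hG_ae.mono fun x hx => (congrFun (hq_mem x hx) θ).symm)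
  have hZ_deriv : ∀ᶠ θ in 𝓝 θ₀, HasDerivAt Z (∫ x, deriv (fun t => q t x) θ) θ := by
    filter_upwards [hVo.mem_nhds hθ₀] with θ hθ
    rw [hZq]
    exact (hfirst θ hθ).2
  obtain ⟨hlog₁, hlog₂⟩ := deriv_log_and_deriv_deriv_log hZ_pos hZ_deriv hsecond.2
  refine ⟨(hZ_deriv.self_of_nhds.log (hZ_pos θ₀).ne').differentiableAt,
    hlog₂.differentiableAt, ?_⟩
  have hintegrand : (fun x => (deriv (deriv (fun θ' => Real.log (p θ' x))) θ₀ +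
      (deriv (fun θ' => Real.log (p θ' x)) θ₀) ^ 2) * π θ₀ x) =ᵐ[volume]
      fun x => deriv (deriv fun t => q t x) θ₀ / Z θ₀ := by
    filter_upwards [hG_ae] with x hx
    obtain ⟨h₁, h₂⟩ := deriv_log_and_deriv_deriv_log (f := fun t => p t x)
      (fun t => hp_pos t x)
      (Filter.mem_of_superset hU fun t ht => (hG_diff x hx t ht).1.hasDerivAt)
      (hG_diff x hx θ₀ (hVU hθ₀)).2.hasDerivAt
    rw [h₂.deriv, h₁, hπ, hq_mem x hx]
    have hp_ne := (hp_pos θ₀ x).ne'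
    have hZ_ne := (hZ_pos θ₀).ne'
    field_simp
    ring
  rw [hlog₂.deriv, hlog₁, integral_congr_ae hintegrand, integral_div]
  ring
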